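/- arXiv:1601.07113 — 3 statements merged into one kernel-verified Lean document; each statement's English description precedes it below -/
import Mathlib

section
/- Let α > 0, β > 0, t₀ > 0, let Φ : H → ℝ be convex and twice continuously differentiable, and let x : [t₀, ∞) → H be a solution of (DIN-AVD). Then for every θ ∈ [0, β] and every t ≥ max{t₀, αθ/2}, the derivative of the energy W_θ satisfies W_θ′(t) ≤ −(α/(2t))‖ẋ(t)‖² − (α/(2t))‖ẋ(t) + θ∇Φ(x(t))‖². -/
open Filter MeasureTheory Set
open scoped Topology RealInnerProductSpace

variable {H : Type*} [NormedAddCommGroup H] [InnerProductSpace ℝ H] [CompleteSpace H]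

/-- `x`, together with its first and second derivatives `x'`, `x''`, is a twice continuously
differentiable solution of (DIN-AVD) on `[t₀, ∞)`:
`ẍ(t) + (α/t) ẋ(t) + β ∇²Φ(x(t)) ẋ(t) + ∇Φ(x(t)) = 0`. -/
def IsDINAVDSolution (α β t₀ : ℝ) (Φ : H → ℝ) (x x' x'' : ℝ → H) : Prop :=
  (∀ t ∈ Set.Ici t₀, HasDerivAt x (x' t) t) ∧
  (∀ t ∈ Set.Ici t₀, HasDerivAt x' (x'' t) t) ∧
  ContinuousOn x'' (Set.Ici t₀) ∧
  ∀ t ∈ Set.Ici t₀,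
    x'' t + (α / t) • x' t + β • (fderiv ℝ (gradient Φ) (x t)) (x' t)
      + gradient Φ (x t) = 0

/-- The energy function `W_θ`. -/
noncomputable def energyW (β θ : ℝ) (Φ : H → ℝ) (x x' : ℝ → H) (t : ℝ) : ℝ :=
  Φ (x t) + (1 / 2) * ‖x' t + θ • gradient Φ (x t)‖ ^ 2
    + (θ * (β - θ) / 2) * ‖gradient Φ (x t)‖ ^ 2

/-!
Substituting the equation for `ẍ` into the derivative of `W_θ` turns it into an exact dissipation
identity: with `γ = α / t`,
`W_θ' = -(γ/2)‖ẋ‖² - (γ/2)‖ẋ + θ∇Φ‖² - θ(1 - γθ/2)‖∇Φ‖² - (β - θ)⟪∇²Φ ẋ, ẋ⟫`.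
The third term is nonpositive because `t ≥ αθ/2`, the fourth because the Hessian of a convex
function is positive semidefinite: convexity makes the gradient monotone, and difference quotients
of a monotone map pass to the limit.
-/

section Convexity

variable {E : Type*}

theorem hasFDerivAt_apply_sub_le_of_convexOn [NormedAddCommGroup E] [NormedSpace ℝ E]
    {s : Set E} {f : E → ℝ} {f'a f'b : E →L[ℝ] ℝ} {a b : E} (hf : ConvexOn ℝ s f)
    (ha : a ∈ s) (hb : b ∈ s) (hfa : HasFDerivAt f f'a a) (hfb : HasFDerivAt f f'b b) :
    f'a (b - a) ≤ f'b (b - a) := by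
  let ℓ : ℝ →ᵃ[ℝ] E := AffineMap.lineMap a b
  have hℓ₀ : ℓ 0 = a := AffineMap.lineMap_apply_zero a b
  have hℓ₁ : ℓ 1 = b := AffineMap.lineMap_apply_one a b
  have hℓ : ∀ r, HasDerivAt ℓ (b - a) r := fun _ => AffineMap.hasDerivAt_lineMap
  have hconv : ConvexOn ℝ (ℓ ⁻¹' s) (f ∘ ℓ) := hf.comp_affineMap ℓ
  have h₀ : (0 : ℝ) ∈ ℓ ⁻¹' s := by rwa [mem_preimage, hℓ₀]
  have h₁ : (1 : ℝ) ∈ ℓ ⁻¹' s := by rwa [mem_preimage, hℓ₁]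
  have hd₀ : HasDerivAt (f ∘ ℓ) (f'a (b - a)) 0 :=
    HasFDerivAt.comp_hasDerivAt 0 (hℓ₀.symm ▸ hfa) (hℓ 0)
  have hd₁ : HasDerivAt (f ∘ ℓ) (f'b (b - a)) 1 :=
    HasFDerivAt.comp_hasDerivAt 1 (hℓ₁.symm ▸ hfb) (hℓ 1)
  exact (hconv.le_slope_of_hasDerivAt h₀ h₁ one_pos hd₀).trans
    (hconv.slope_le_of_hasDerivAt h₀ h₁ one_pos hd₁)

theorem inner_gradient_sub_nonneg_of_convexOn {s : Set H} {Φ : H → ℝ} {a b : H}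
    (hΦ : ConvexOn ℝ s Φ) (ha : a ∈ s) (hb : b ∈ s)
    (hΦa : DifferentiableAt ℝ Φ a) (hΦb : DifferentiableAt ℝ Φ b) :
    0 ≤ ⟪gradient Φ b - gradient Φ a, b - a⟫ := by
  rw [inner_sub_left, inner_gradient_left, inner_gradient_left, sub_nonneg]
  exact hasFDerivAt_apply_sub_le_of_convexOn hΦ ha hb hΦa.hasFDerivAt hΦb.hasFDerivAt

theorem inner_hasFDerivAt_nonneg_of_eventually_inner_sub_nonneg
    [NormedAddCommGroup E] [InnerProductSpace ℝ E] {F : E → E} {F' : E →L[ℝ] E} {y : E}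
    (hF : HasFDerivAt F F' y) (hmono : ∀ᶠ z in 𝓝 y, 0 ≤ ⟪F z - F y, z - y⟫) (v : E) :
    0 ≤ ⟪F' v, v⟫ := by
  have hquot : Tendsto (fun r : ℝ => ⟪r⁻¹ • (F (y + r • v) - F y), v⟫) (𝓝[>] 0)
      (𝓝 ⟪F' v, v⟫) :=
    (((hF.hasLineDerivAt v).tendsto_slope_zero).inner tendsto_const_nhds).mono_left
      (nhdsWithin_mono _ fun _ hr => ne_of_gt hr)
  have hline : Tendsto (fun r : ℝ => y + r • v) (𝓝[>] 0) (𝓝 y) := by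
    have hcont : Continuous fun r : ℝ => y + r • v := by fun_prop
    exact (hcont.tendsto' 0 y (by simp)).mono_left nhdsWithin_le_nhds
  refine ge_of_tendsto hquot ?_
  filter_upwards [hline.eventually hmono, self_mem_nhdsWithin] with r hr (hr₀ : 0 < r)
  rw [add_sub_cancel_left, real_inner_smul_right] at hr
  rw [real_inner_smul_left]
  exact mul_nonneg (inv_nonneg.2 hr₀.le) (nonneg_of_mul_nonneg_right hr hr₀)

theorem inner_fderiv_gradient_nonneg_of_convexOn {s : Set H} {Φ : H → ℝ} {y : H}
    (hΦ : ConvexOn ℝ s Φ) (hs : s ∈ 𝓝 y) (hd : ∀ᶠ z in 𝓝 y, DifferentiableAt ℝ Φ z)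
    (hd₂ : DifferentiableAt ℝ (gradient Φ) y) (v : H) :
    0 ≤ ⟪fderiv ℝ (gradient Φ) y v, v⟫ := by
  refine inner_hasFDerivAt_nonneg_of_eventually_inner_sub_nonneg hd₂.hasFDerivAt ?_ v
  filter_upwards [hs, hd] with z hz hdz
  exact inner_gradient_sub_nonneg_of_convexOn hΦ (mem_of_mem_nhds hs) hz hd.self_of_nhds hdz

end Convexity

theorem contDiff_gradient {n : WithTop ℕ∞} {Φ : H → ℝ} (hΦ : ContDiff ℝ (n + 1) Φ) :
    ContDiff ℝ n (gradient Φ) :=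
  (InnerProductSpace.toDual ℝ H).symm.toContinuousLinearEquiv.contDiff.comp
    (hΦ.fderiv_right le_rfl)

section Energy

variable {Φ : H → ℝ} {x x' : ℝ → H} {w : H} {t : ℝ}

theorem hasDerivAt_energyW (β θ : ℝ) (hΦ : DifferentiableAt ℝ Φ (x t))
    (hΦ₂ : DifferentiableAt ℝ (gradient Φ) (x t))
    (hx : HasDerivAt x (x' t) t) (hx' : HasDerivAt x' w t) :
    HasDerivAt (energyW β θ Φ x x')
      (⟪gradient Φ (x t), x' t⟫
        + ⟪x' t + θ • gradient Φ (x t), w + θ • fderiv ℝ (gradient Φ) (x t) (x' t)⟫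
        + θ * (β - θ) * ⟪gradient Φ (x t), fderiv ℝ (gradient Φ) (x t) (x' t)⟫) t := by
  have hpot : HasDerivAt (fun s => Φ (x s)) ⟪gradient Φ (x t), x' t⟫ t := by
    rw [inner_gradient_left]
    exact hΦ.hasFDerivAt.comp_hasDerivAt t hx
  have hgrad : HasDerivAt (fun s => gradient Φ (x s)) (fderiv ℝ (gradient Φ) (x t) (x' t)) t :=
    hΦ₂.hasFDerivAt.comp_hasDerivAt t hx
  have hkin := (hx'.fun_add (hgrad.fun_const_smul θ)).norm_sq.const_mul (1 / 2)
  have hres := hgrad.norm_sq.const_mul (θ * (β - θ) / 2)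
  exact ((hpot.fun_add hkin).fun_add hres).congr_deriv (by ring)

theorem hasDerivAt_energyW_of_ode {β γ : ℝ} (θ : ℝ) (hΦ : DifferentiableAt ℝ Φ (x t))
    (hΦ₂ : DifferentiableAt ℝ (gradient Φ) (x t))
    (hx : HasDerivAt x (x' t) t) (hx' : HasDerivAt x' w t)
    (hode : w + γ • x' t + β • fderiv ℝ (gradient Φ) (x t) (x' t) + gradient Φ (x t) = 0) :
    HasDerivAt (energyW β θ Φ x x')
      (-(γ / 2) * ‖x' t‖ ^ 2 - γ / 2 * ‖x' t + θ • gradient Φ (x t)‖ ^ 2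
        - θ * (1 - γ * θ / 2) * ‖gradient Φ (x t)‖ ^ 2
        - (β - θ) * ⟪fderiv ℝ (gradient Φ) (x t) (x' t), x' t⟫) t := by
  refine (hasDerivAt_energyW β θ hΦ hΦ₂ hx hx').congr_deriv ?_
  set g := gradient Φ (x t)
  set h := fderiv ℝ (gradient Φ) (x t) (x' t)
  have hw : w = -(γ • x' t) - β • h - g := by
    rw [← sub_eq_zero, ← hode]
    abel
  simp only [hw, ← real_inner_self_eq_norm_sq, inner_add_left, inner_add_right, inner_sub_right,
    inner_neg_right, real_inner_smul_left, real_inner_smul_right, real_inner_comm (x' t)]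
  ring

end Energy

theorem stmt0_general {α β t₀ : ℝ} (ht₀ : 0 < t₀) {s : Set H} {Φ : H → ℝ}
    {x x' x'' : ℝ → H} (hsol : IsDINAVDSolution α β t₀ Φ x x' x'')
    {θ : ℝ} (hθ : θ ∈ Set.Icc 0 β) {t : ℝ} (ht : max t₀ (α * θ / 2) ≤ t)
    (hconv : ConvexOn ℝ s Φ) (hs : s ∈ 𝓝 (x t))
    (hΦ : ∀ᶠ y in 𝓝 (x t), DifferentiableAt ℝ Φ y)
    (hΦ₂ : DifferentiableAt ℝ (gradient Φ) (x t)) :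
    DifferentiableAt ℝ (energyW β θ Φ x x') t ∧
      deriv (energyW β θ Φ x x') t ≤ -(α / (2 * t)) * ‖x' t‖ ^ 2
        - (α / (2 * t)) * ‖x' t + θ • gradient Φ (x t)‖ ^ 2 := by
  obtain ⟨hx, hx', -, hode⟩ := hsol
  obtain ⟨ht₀t, hαθ⟩ := max_le_iff.1 ht
  have htpos : 0 < t := ht₀.trans_le ht₀t
  have hW := hasDerivAt_energyW_of_ode θ hΦ.self_of_nhds hΦ₂ (hx t ht₀t) (hx' t ht₀t)
    (hode t ht₀t)
  have hdamp : 0 ≤ 1 - α / t * θ / 2 := by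
    rw [sub_nonneg, div_mul_eq_mul_div, div_right_comm]
    exact div_le_one_of_le₀ hαθ htpos.le
  have hgrad : 0 ≤ θ * (1 - α / t * θ / 2) * ‖gradient Φ (x t)‖ ^ 2 :=
    mul_nonneg (mul_nonneg hθ.1 hdamp) (sq_nonneg _)
  have hhess : 0 ≤ (β - θ) * ⟪fderiv ℝ (gradient Φ) (x t) (x' t), x' t⟫ :=
    mul_nonneg (sub_nonneg.2 hθ.2)
      (inner_fderiv_gradient_nonneg_of_convexOn hconv hs hΦ hΦ₂ (x' t))
  refine ⟨hW.differentiableAt, ?_⟩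
  rw [hW.deriv, mul_comm 2 t, ← div_div]
  linarith

theorem stmt0 (α β t₀ : ℝ) (hα : 0 < α) (hβ : 0 < β) (ht₀ : 0 < t₀)
    (Φ : H → ℝ) (hconv : ConvexOn ℝ Set.univ Φ) (hΦ : ContDiff ℝ 2 Φ)
    (x x' x'' : ℝ → H) (hsol : IsDINAVDSolution α β t₀ Φ x x' x'')
    (θ : ℝ) (hθ : θ ∈ Set.Icc 0 β)
    (t : ℝ) (ht : max t₀ (α * θ / 2) ≤ t)
    (W' : ℝ) (hW' : HasDerivAt (energyW β θ Φ x x') W' t) :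
    W' ≤ -(α / (2 * t)) * ‖x' t‖ ^ 2
        - (α / (2 * t)) * ‖x' t + θ • gradient Φ (x t)‖ ^ 2 := by
  have hΦ₁ : Differentiable ℝ Φ := hΦ.differentiable two_ne_zero
  have hΦ₂ : Differentiable ℝ (gradient Φ) :=
    (contDiff_gradient (n := 1) hΦ).differentiable one_ne_zero
  exact hW'.deriv ▸
    (stmt0_general ht₀ hsol hθ ht hconv univ_mem (.of_forall hΦ₁) (hΦ₂ (x t))).2
end

section
/- Let α > 0, β > 0, t₀ > 0, let Φ : H → ℝ be convex and twice continuously differentiable with inf Φ > −∞, and let x : [t₀, ∞) → H be a solution of (DIN-AVD). Then ‖ẋ(t)‖ → 0 and ‖∇Φ(x(t))‖ → 0 as t → ∞, and moreover ∫_{t₀}^∞ (1/t)‖ẋ(t)‖² dt < ∞ and ∫_{t₀}^∞ (1/t)‖∇Φ(x(t))‖² dt < ∞. -/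
open Filter MeasureTheory Set
open scoped Topology RealInnerProductSpace

variable {H : Type*} [NormedAddCommGroup H] [InnerProductSpace ℝ H] [CompleteSpace H]

/-!
Let `y = ẋ + β ∇Φ(x)`, so that `ẏ = -(α/t) ẋ - ∇Φ(x)`, and let `m = inf Φ`. The Lyapunov function
`½‖y‖² + (1 + αβ/t)(Φ(x) - m)` decreases at least at the rate `(α/t)‖ẋ‖² + β‖∇Φ(x)‖²`; both
integrability claims follow, even without the weight `1/t` for the gradient.

The energy `W = Φ(x) + ½‖ẋ‖²` is nonincreasing because the Hessian is positive. To see that it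
decreases to `m`, fix `z` and consider
`(⟪y, x - z⟫ - β(Φ(x) - Φ(z)))/t + ((1 + α)/2) ‖x - z‖²/t² + (3/(2α)) W`.
By convexity it is bounded below, while its derivative is at most `-(W - Φ(z))/t`. As `1/t` is not
integrable at infinity, `W` cannot stay above any `c > Φ(z)`. Hence `ẋ → 0` and `Φ(x) → m`. The
convergence of the Lyapunov function then makes `‖∇Φ(x)‖` converge, and its limit is zero because
`‖∇Φ(x)‖²` is integrable.
-/

section MonotoneLimits

theorem exists_tendsto_atTop_of_antitoneOn_Ici {ι R : Type*} [SemilatticeSup ι]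
    [ConditionallyCompletePartialOrderInf R] [TopologicalSpace R] [InfConvergenceClass R]
    {f : ι → R} {a : ι} (hf : AntitoneOn f (Ici a)) (hbdd : BddBelow (f '' Ici a)) :
    ∃ l, Tendsto f atTop (𝓝 l) := by
  rw [image_eq_range] at hbdd
  have hanti : Antitone fun t : Ici a => f t := fun s t hst => hf s.2 t.2 hst
  exact ⟨_, tendsto_comp_val_Ici_atTop.1 (tendsto_atTop_ciInf hanti hbdd)⟩

variable {f f' h : ℝ → ℝ} {a c : ℝ}

theorem antitoneOn_Ici_of_hasDerivAt_nonpos (hf : ∀ t ∈ Ici a, HasDerivAt f (f' t) t)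
    (hf' : ∀ t ∈ Ici a, f' t ≤ 0) : AntitoneOn f (Ici a) :=
  antitoneOn_of_hasDerivWithinAt_nonpos (convex_Ici a)
    (fun t ht => (hf t ht).continuousAt.continuousWithinAt)
    (fun t ht => (hf t (interior_subset ht)).hasDerivWithinAt)
    fun t ht => hf' t (interior_subset ht)

theorem integrableOn_Ici_of_hasDerivAt_le_neg_mul (hc : 0 < c)
    (hf : ∀ t ∈ Ici a, HasDerivAt f (f' t) t) (hbdd : BddBelow (f '' Ici a))
    (hcont : ContinuousOn h (Ici a)) (hnonneg : ∀ t ∈ Ici a, 0 ≤ h t)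
    (hle : ∀ t ∈ Ici a, f' t ≤ -(c * h t)) : IntegrableOn h (Ici a) := by
  have hf' : ∀ t ∈ Ici a, f' t ≤ 0 := fun t ht =>
    (hle t ht).trans (neg_nonpos.2 (mul_nonneg hc.le (hnonneg t ht)))
  obtain ⟨l, hl⟩ := exists_tendsto_atTop_of_antitoneOn_Ici
    (antitoneOn_Ici_of_hasDerivAt_nonpos hf hf') hbdd
  have hint : IntegrableOn f' (Ici a) := (integrableOn_Ici_iff_integrableOn_Ioi).2
    (integrableOn_Ioi_deriv_of_nonpos' hf (fun t ht => hf' t (Ioi_subset_Ici_self ht)) hl)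
  refine (hint.const_mul (-c⁻¹)).mono' (hcont.aestronglyMeasurable measurableSet_Ici)
    (ae_restrict_of_forall_mem measurableSet_Ici fun t ht => ?_)
  calc ‖h t‖ = c⁻¹ * (c * h t) := by
        rw [Real.norm_of_nonneg (hnonneg t ht), inv_mul_cancel_left₀ hc.ne']
    _ ≤ c⁻¹ * -f' t := by gcongr; linarith [hle t ht]
    _ = -c⁻¹ * f' t := by ring

theorem not_bddBelow_of_hasDerivAt_le_neg_mul_inv (ha : 0 < a) (hc : 0 < c)
    (hf : ∀ t ∈ Ici a, HasDerivAt f (f' t) t) (hle : ∀ t ∈ Ici a, f' t ≤ -(c * t⁻¹)) :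
    ¬BddBelow (f '' Ici a) := fun hbdd =>
  have hpos : ∀ t ∈ Ici a, 0 < t := fun _ ht => ha.trans_le ht
  not_integrableOn_Ici_inv <| integrableOn_Ici_of_hasDerivAt_le_neg_mul hc hf hbdd
    (continuousOn_id.inv₀ fun t ht => (hpos t ht).ne')
    (fun t ht => (inv_pos.2 (hpos t ht)).le) hle

theorem eq_zero_of_tendsto_of_integrableOn_Ici {F : Type*} [NormedAddCommGroup F] {u : ℝ → F}
    {l : F} (hu : IntegrableOn u (Ici a)) (hl : Tendsto u atTop (𝓝 l)) : l = 0 := by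
  refine IntegrableAtFilter.eq_zero_of_tendsto ⟨Ici a, Ici_mem_atTop a, hu⟩ (fun s hs => ?_) hl
  obtain ⟨b, hb⟩ := mem_atTop_sets.1 hs
  exact top_le_iff.1 (Real.volume_Ici (a := b) ▸ measure_mono hb)

end MonotoneLimits

theorem add_fderiv_sub_le_of_convexOn {F : Type*} [NormedAddCommGroup F] [NormedSpace ℝ F]
    {s : Set F} {f : F → ℝ} {f' : F →L[ℝ] ℝ} {p q : F} (hf : ConvexOn ℝ s f) (hp : p ∈ s)
    (hq : q ∈ s) (hf' : HasFDerivAt f f' p) : f p + f' (q - p) ≤ f q := by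
  have hline : HasDerivAt (f ∘ AffineMap.lineMap (k := ℝ) p q) (f' (q - p)) 0 :=
    HasFDerivAt.comp_hasDerivAt 0 (by simpa using hf') AffineMap.hasDerivAt_lineMap
  have hslope := (hf.comp_affineMap (AffineMap.lineMap p q)).le_slope_of_hasDerivAt
    (x := 0) (y := 1) (by simpa using hp) (by simpa using hq) one_pos hline
  simp only [slope_def_field, Function.comp_apply, AffineMap.lineMap_apply_one,
    AffineMap.lineMap_apply_zero, sub_zero, div_one] at hslope
  linarith

section GradientField

variable {E : Type*} [NormedAddCommGroup E] [InnerProductSpace ℝ E]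

theorem sub_le_inner_of_convexOn {s : Set E} {f : E → ℝ} {p q y : E} (hf : ConvexOn ℝ s f)
    (hp : p ∈ s) (hq : q ∈ s) (hy : HasFDerivAt f (innerSL ℝ y) p) :
    f p - f q ≤ ⟪y, p - q⟫ := by
  have htangent := add_fderiv_sub_le_of_convexOn hf hp hq hy
  rw [innerSL_apply_apply, ← neg_sub p q, inner_neg_right] at htangent
  linarith

theorem inner_sub_sub_nonneg_of_convexOn {s : Set E} {f : E → ℝ} {g : E → E} {p q : E}
    (hf : ConvexOn ℝ s f) (hg : ∀ r ∈ s, HasFDerivAt f (innerSL ℝ (g r)) r) (hp : p ∈ s)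
    (hq : q ∈ s) : 0 ≤ ⟪g p - g q, p - q⟫ := by
  have hpq := sub_le_inner_of_convexOn hf hp hq (hg p hp)
  have hqp := sub_le_inner_of_convexOn hf hq hp (hg q hq)
  rw [← neg_sub p q, inner_neg_right] at hqp
  rw [inner_sub_left]
  linarith

theorem inner_fderiv_apply_self_nonneg {g : E → E} {g' : E →L[ℝ] E} {p : E}
    (hmono : ∀ q r, 0 ≤ ⟪g q - g r, q - r⟫) (hg : HasFDerivAt g g' p) (w : E) :
    0 ≤ ⟪g' w, w⟫ := by
  have hline : HasDerivAt (fun s : ℝ => p + s • w) w 0 := by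
    simpa using ((hasDerivAt_id (0 : ℝ)).smul_const w).const_add p
  have hderiv : HasDerivAt (fun s : ℝ => ⟪g (p + s • w), w⟫) ⟪g' w, w⟫ 0 := by
    have hcomp := HasFDerivAt.comp_hasDerivAt (f := fun s : ℝ => p + s • w) (l := g) (l' := g')
      0 (by simpa using hg) hline
    simpa using hcomp.inner ℝ (hasDerivAt_const (0 : ℝ) w)
  have hmonotone : Monotone fun s : ℝ => ⟪g (p + s • w), w⟫ := fun s t hst => by
    rcases hst.eq_or_lt with rfl | hst
    · rfl
    have hst' := hmono (p + t • w) (p + s • w)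
    rw [add_sub_add_left_eq_sub, ← sub_smul, real_inner_smul_right, inner_sub_left] at hst'
    exact sub_nonneg.1 (nonneg_of_mul_nonneg_right hst' (sub_pos.2 hst))
  exact hderiv.deriv ▸ hmonotone.deriv_nonneg

/-- A trajectory with velocity `v` of the inertial system
`ẍ + (α/t) ẋ + β ∇²Φ(x) ẋ + ∇Φ(x) = 0` on `[t₀, ∞)`, solved for the acceleration. The space need
not be complete, so the Riesz representation is not available: the gradient of `Φ` is given as a
field `g`, and its Hessian as the derivative `B` of that field. -/
structure IsDINAVDTrajectory (α β t₀ : ℝ) (Φ : E → ℝ) (g : E → E) (B : E → E →L[ℝ] E)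
    (x v : ℝ → E) : Prop where
  hasFDerivAt_potential : ∀ p, HasFDerivAt Φ (innerSL ℝ (g p)) p
  hasFDerivAt_gradient : ∀ p, HasFDerivAt g (B p) p
  hasDerivAt_position : ∀ t ∈ Ici t₀, HasDerivAt x (v t) t
  hasDerivAt_velocity : ∀ t ∈ Ici t₀,
    HasDerivAt v (-((α / t) • v t + β • B (x t) (v t) + g (x t))) t

/-- The total (potential plus kinetic) energy of a curve `x` with velocity `v`. -/
noncomputable def totalEnergy (Φ : E → ℝ) (x v : ℝ → E) (t : ℝ) : ℝ :=
  Φ (x t) + 1 / 2 * ‖v t‖ ^ 2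

/-- The velocity corrected by the Hessian damping, `ẋ + β ∇Φ(x)`; its derivative along a trajectory
contains no second derivative of `Φ`. -/
def dampedVelocity (β : ℝ) (g : E → E) (x v : ℝ → E) (t : ℝ) : E :=
  v t + β • g (x t)

/-- The Lyapunov function `½‖ẋ + β ∇Φ(x)‖² + (1 + αβ/t)(Φ(x) - inf Φ)`, whose decay controls both
the velocity and the gradient. -/
noncomputable def dampedLyapunov (α β : ℝ) (Φ : E → ℝ) (g : E → E) (x v : ℝ → E) (t : ℝ) : ℝ :=
  1 / 2 * ‖dampedVelocity β g x v t‖ ^ 2 + (1 + α * β / t) * (Φ (x t) - ⨅ p, Φ p)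

/-- The Lyapunov function anchored at a comparison point `z`, used to bring the total energy below
every value larger than `Φ z`. The coefficient of `‖x - z‖²/t²` cancels the terms in `⟪ẋ, x - z⟫`
of the derivative, and that of the energy absorbs the kinetic terms. -/
noncomputable def anchoredLyapunov (α β : ℝ) (Φ : E → ℝ) (g : E → E) (x v : ℝ → E) (z : E)
    (t : ℝ) : ℝ :=
  (⟪dampedVelocity β g x v t, x t - z⟫ - β * (Φ (x t) - Φ z)) / t
    + (1 + α) / 2 * (‖x t - z‖ ^ 2 / t ^ 2) + 3 / (2 * α) * totalEnergy Φ x v t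

namespace IsDINAVDTrajectory

variable {α β t₀ t : ℝ} {Φ : E → ℝ} {g : E → E} {B : E → E →L[ℝ] E} {x v : ℝ → E}

theorem hasDerivAt_potential_comp (h : IsDINAVDTrajectory α β t₀ Φ g B x v) (ht : t ∈ Ici t₀) :
    HasDerivAt (fun s => Φ (x s)) ⟪g (x t), v t⟫ t :=
  (h.hasFDerivAt_potential (x t)).comp_hasDerivAt t (h.hasDerivAt_position t ht)

theorem hasDerivAt_gradient_comp (h : IsDINAVDTrajectory α β t₀ Φ g B x v) (ht : t ∈ Ici t₀) :
    HasDerivAt (fun s => g (x s)) (B (x t) (v t)) t :=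
  (h.hasFDerivAt_gradient (x t)).comp_hasDerivAt t (h.hasDerivAt_position t ht)

theorem inner_hessian_nonneg (h : IsDINAVDTrajectory α β t₀ Φ g B x v)
    (hΦ : ConvexOn ℝ univ Φ) (p w : E) : 0 ≤ ⟪B p w, w⟫ :=
  inner_fderiv_apply_self_nonneg
    (fun q r => inner_sub_sub_nonneg_of_convexOn hΦ (fun p _ => h.hasFDerivAt_potential p)
      (mem_univ q) (mem_univ r))
    (h.hasFDerivAt_gradient p) w

theorem hasDerivAt_totalEnergy (h : IsDINAVDTrajectory α β t₀ Φ g B x v) (ht : t ∈ Ici t₀) :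
    HasDerivAt (totalEnergy Φ x v) (-(α / t * ‖v t‖ ^ 2) - β * ⟪B (x t) (v t), v t⟫) t := by
  refine ((h.hasDerivAt_potential_comp ht).add
    ((h.hasDerivAt_velocity t ht).norm_sq.const_mul (1 / 2))).congr_deriv ?_
  simp only [inner_neg_right, inner_add_right, real_inner_smul_right, real_inner_self_eq_norm_sq,
    real_inner_comm (B (x t) (v t)) (v t), real_inner_comm (g (x t)) (v t)]
  ring

theorem antitoneOn_totalEnergy (h : IsDINAVDTrajectory α β t₀ Φ g B x v) (hα : 0 ≤ α)
    (hβ : 0 ≤ β) (ht₀ : 0 ≤ t₀) (hΦ : ConvexOn ℝ univ Φ) :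
    AntitoneOn (totalEnergy Φ x v) (Ici t₀) := by
  refine antitoneOn_Ici_of_hasDerivAt_nonpos (fun _ => h.hasDerivAt_totalEnergy) fun t ht => ?_
  have hfriction : 0 ≤ α / t * ‖v t‖ ^ 2 :=
    mul_nonneg (div_nonneg hα (ht₀.trans ht)) (sq_nonneg _)
  have hdamping := mul_nonneg hβ (h.inner_hessian_nonneg hΦ (x t) (v t))
  linarith

theorem hasDerivAt_dampedVelocity (h : IsDINAVDTrajectory α β t₀ Φ g B x v)
    (ht : t ∈ Ici t₀) :
    HasDerivAt (dampedVelocity β g x v) (-((α / t) • v t + g (x t))) t := by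
  refine ((h.hasDerivAt_velocity t ht).add
    ((h.hasDerivAt_gradient_comp ht).const_smul β)).congr_deriv ?_
  module

theorem hasDerivAt_dampedLyapunov (h : IsDINAVDTrajectory α β t₀ Φ g B x v) (ht : t ∈ Ici t₀)
    (ht_ne : t ≠ 0) :
    HasDerivAt (dampedLyapunov α β Φ g x v)
      (-(α * (1 / t * ‖v t‖ ^ 2)) - β * ‖g (x t)‖ ^ 2
        - α * β / t ^ 2 * (Φ (x t) - ⨅ p, Φ p)) t := by
  refine (((h.hasDerivAt_dampedVelocity ht).norm_sq.const_mul (1 / 2)).add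
    ((((hasDerivAt_inv ht_ne).const_mul (α * β)).const_add 1).mul
      ((h.hasDerivAt_potential_comp ht).sub_const _))).congr_deriv ?_
  simp only [dampedVelocity, inner_neg_right, inner_add_left, inner_add_right,
    real_inner_smul_left, real_inner_smul_right, real_inner_self_eq_norm_sq,
    real_inner_comm (g (x t)) (v t)]
  field_simp
  ring

theorem deriv_dampedLyapunov_le (h : IsDINAVDTrajectory α β t₀ Φ g B x v) (hα : 0 ≤ α)
    (hβ : 0 ≤ β) (hbdd : BddBelow (range Φ)) (ht : t ∈ Ici t₀) (ht_ne : t ≠ 0) :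
    deriv (dampedLyapunov α β Φ g x v) t
      ≤ -(α * (1 / t * ‖v t‖ ^ 2)) - β * ‖g (x t)‖ ^ 2 := by
  have hgap : 0 ≤ Φ (x t) - ⨅ p, Φ p := sub_nonneg.2 (ciInf_le hbdd (x t))
  rw [(h.hasDerivAt_dampedLyapunov ht ht_ne).deriv]
  exact sub_le_self _ (by positivity)

theorem dampedLyapunov_nonneg (hα : 0 ≤ α) (hβ : 0 ≤ β) (hbdd : BddBelow (range Φ))
    (ht : 0 ≤ t) : 0 ≤ dampedLyapunov α β Φ g x v t := by
  have hgap : 0 ≤ Φ (x t) - ⨅ p, Φ p := sub_nonneg.2 (ciInf_le hbdd (x t))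
  unfold dampedLyapunov
  positivity

theorem bddBelow_dampedLyapunov (hα : 0 ≤ α) (hβ : 0 ≤ β) (hbdd : BddBelow (range Φ))
    (ht₀ : 0 ≤ t₀) : BddBelow (dampedLyapunov α β Φ g x v '' Ici t₀) :=
  ⟨0, forall_mem_image.2 fun _ ht => dampedLyapunov_nonneg hα hβ hbdd (ht₀.trans ht)⟩

theorem integrableOn_one_div_mul_norm_velocity_sq (h : IsDINAVDTrajectory α β t₀ Φ g B x v)
    (hα : 0 < α) (hβ : 0 ≤ β) (ht₀ : 0 < t₀) (hbdd : BddBelow (range Φ)) :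
    IntegrableOn (fun t => 1 / t * ‖v t‖ ^ 2) (Ici t₀) := by
  have hpos : ∀ t ∈ Ici t₀, 0 < t := fun t ht => ht₀.trans_le ht
  have hcont : ContinuousOn v (Ici t₀) := HasDerivAt.continuousOn h.hasDerivAt_velocity
  refine integrableOn_Ici_of_hasDerivAt_le_neg_mul hα
    (fun t ht =>
      (h.hasDerivAt_dampedLyapunov ht (hpos t ht).ne').differentiableAt.hasDerivAt)
    (bddBelow_dampedLyapunov hα.le hβ hbdd ht₀.le)
    ((continuousOn_const.div continuousOn_id fun t ht => (hpos t ht).ne').mul (hcont.norm.pow 2))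
    (fun t ht => ?_) fun t ht => ?_
  · have := hpos t ht
    positivity
  · have hgradient : 0 ≤ β * ‖g (x t)‖ ^ 2 := by positivity
    linarith [h.deriv_dampedLyapunov_le hα.le hβ hbdd ht (hpos t ht).ne']

theorem integrableOn_norm_gradient_sq (h : IsDINAVDTrajectory α β t₀ Φ g B x v) (hα : 0 ≤ α)
    (hβ : 0 < β) (ht₀ : 0 < t₀) (hbdd : BddBelow (range Φ)) :
    IntegrableOn (fun t => ‖g (x t)‖ ^ 2) (Ici t₀) := by
  have hpos : ∀ t ∈ Ici t₀, 0 < t := fun t ht => ht₀.trans_le ht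
  have hcont : ContinuousOn (fun t => g (x t)) (Ici t₀) :=
    HasDerivAt.continuousOn fun t ht => h.hasDerivAt_gradient_comp ht
  refine integrableOn_Ici_of_hasDerivAt_le_neg_mul hβ
    (fun t ht =>
      (h.hasDerivAt_dampedLyapunov ht (hpos t ht).ne').differentiableAt.hasDerivAt)
    (bddBelow_dampedLyapunov hα hβ.le hbdd ht₀.le) (hcont.norm.pow 2)
    (fun t _ => sq_nonneg _) fun t ht => ?_
  have htpos := hpos t ht
  have hfriction : 0 ≤ α * (1 / t * ‖v t‖ ^ 2) := by positivity
  linarith [h.deriv_dampedLyapunov_le hα hβ.le hbdd ht (hpos t ht).ne']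

theorem integrableOn_one_div_mul_norm_gradient_sq (h : IsDINAVDTrajectory α β t₀ Φ g B x v)
    (hα : 0 ≤ α) (hβ : 0 < β) (ht₀ : 0 < t₀) (hbdd : BddBelow (range Φ)) :
    IntegrableOn (fun t => 1 / t * ‖g (x t)‖ ^ 2) (Ici t₀) := by
  have hcont : ContinuousOn (fun t : ℝ => 1 / t) (Ici t₀) :=
    continuousOn_const.div continuousOn_id fun t ht => (ht₀.trans_le ht).ne'
  refine (h.integrableOn_norm_gradient_sq hα hβ ht₀ hbdd).bdd_mul (c := 1 / t₀)
    (hcont.aestronglyMeasurable measurableSet_Ici)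
    (ae_restrict_of_forall_mem measurableSet_Ici fun t ht => ?_)
  rw [Real.norm_of_nonneg (one_div_nonneg.2 (ht₀.le.trans ht))]
  exact one_div_le_one_div_of_le ht₀ ht

theorem hasDerivAt_anchoredLyapunov (h : IsDINAVDTrajectory α β t₀ Φ g B x v) (hα : α ≠ 0)
    (z : E) (ht : t ∈ Ici t₀) (ht_ne : t ≠ 0) :
    HasDerivAt (anchoredLyapunov α β Φ g x v z)
      (-((⟪g (x t), x t - z⟫ + 1 / 2 * ‖v t‖ ^ 2) / t
        + β * (⟪g (x t), x t - z⟫ - (Φ (x t) - Φ z)) / t ^ 2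
        + (1 + α) * ‖x t - z‖ ^ 2 / t ^ 3
        + 3 * β / (2 * α) * ⟪B (x t) (v t), v t⟫)) t := by
  have hdiff := (h.hasDerivAt_position t ht).sub_const z
  have hpairing := (((h.hasDerivAt_dampedVelocity ht).inner ℝ hdiff).sub
    (((h.hasDerivAt_potential_comp ht).sub_const (Φ z)).const_mul β)).div (hasDerivAt_id t) ht_ne
  have hdistance := (hdiff.norm_sq.div (hasDerivAt_pow 2 t) (pow_ne_zero 2 ht_ne)).const_mul
    ((1 + α) / 2)
  have henergy := (h.hasDerivAt_totalEnergy ht).const_mul (3 / (2 * α))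
  refine ((hpairing.add hdistance).add henergy).congr_deriv ?_
  simp only [dampedVelocity, Pi.sub_apply, inner_neg_left, inner_add_left, real_inner_smul_left,
    real_inner_self_eq_norm_sq, real_inner_comm (v t) (x t - z), id]
  field_simp
  ring

theorem deriv_anchoredLyapunov_le (h : IsDINAVDTrajectory α β t₀ Φ g B x v) (hα : 0 < α)
    (hβ : 0 ≤ β) (ht₀ : 0 < t₀) (hΦ : ConvexOn ℝ univ Φ) (z : E) (ht : t ∈ Ici t₀) :
    deriv (anchoredLyapunov α β Φ g x v z) t ≤ -((totalEnergy Φ x v t - Φ z) / t) := by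
  have htpos : 0 < t := ht₀.trans_le ht
  have hconvex := sub_le_inner_of_convexOn hΦ (mem_univ (x t)) (mem_univ z)
    (h.hasFDerivAt_potential (x t))
  have henergy : (totalEnergy Φ x v t - Φ z) / t
      ≤ (⟪g (x t), x t - z⟫ + 1 / 2 * ‖v t‖ ^ 2) / t := by
    gcongr
    unfold totalEnergy
    linarith
  have hbregman : 0 ≤ β * (⟪g (x t), x t - z⟫ - (Φ (x t) - Φ z)) / t ^ 2 :=
    div_nonneg (mul_nonneg hβ (sub_nonneg.2 hconvex)) (sq_nonneg t)
  have hdistance : 0 ≤ (1 + α) * ‖x t - z‖ ^ 2 / t ^ 3 := by positivity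
  have hdamping : 0 ≤ 3 * β / (2 * α) * ⟪B (x t) (v t), v t⟫ :=
    mul_nonneg (by positivity) (h.inner_hessian_nonneg hΦ (x t) (v t))
  rw [(h.hasDerivAt_anchoredLyapunov hα.ne' z ht htpos.ne').deriv]
  linarith

theorem le_anchoredLyapunov (h : IsDINAVDTrajectory α β t₀ Φ g B x v) (hα : 0 < α) (hβ : 0 ≤ β)
    (ht₀ : 0 < t₀) (hΦ : ConvexOn ℝ univ Φ) (z : E) (ht : t ∈ Ici t₀) :
    3 / (2 * α) * totalEnergy Φ x v t - 1 / 2 * ‖v t‖ ^ 2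
      ≤ anchoredLyapunov α β Φ g x v z t := by
  have htpos : 0 < t := ht₀.trans_le ht
  have hconvex := sub_le_inner_of_convexOn hΦ (mem_univ (x t)) (mem_univ z)
    (h.hasFDerivAt_potential (x t))
  have hyoung : -(1 / 2 * ‖v t‖ ^ 2 + 1 / 2 * (‖x t - z‖ ^ 2 / t ^ 2)) ≤ ⟪v t, x t - z⟫ / t := by
    have hsq : 0 ≤ ‖v t + t⁻¹ • (x t - z)‖ ^ 2 := sq_nonneg _
    rw [norm_add_sq_real, real_inner_smul_right, norm_smul, mul_pow, Real.norm_eq_abs, sq_abs,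
      inv_pow] at hsq
    rw [div_eq_inv_mul (‖x t - z‖ ^ 2), div_eq_inv_mul ⟪v t, x t - z⟫]
    linarith
  have hbregman : ⟪v t, x t - z⟫ / t
      ≤ (⟪dampedVelocity β g x v t, x t - z⟫ - β * (Φ (x t) - Φ z)) / t := by
    gcongr
    rw [dampedVelocity, inner_add_left, real_inner_smul_left]
    linarith [mul_le_mul_of_nonneg_left hconvex hβ]
  have hdistance : 0 ≤ α / 2 * (‖x t - z‖ ^ 2 / t ^ 2) := by positivity
  unfold anchoredLyapunov
  linarith

theorem bddBelow_anchoredLyapunov (h : IsDINAVDTrajectory α β t₀ Φ g B x v) (hα : 0 < α)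
    (hβ : 0 ≤ β) (ht₀ : 0 < t₀) (hΦ : ConvexOn ℝ univ Φ) (hbdd : BddBelow (range Φ)) (z : E) :
    BddBelow (anchoredLyapunov α β Φ g x v z '' Ici t₀) := by
  refine ⟨3 / (2 * α) * (⨅ p, Φ p) - (totalEnergy Φ x v t₀ - ⨅ p, Φ p),
    forall_mem_image.2 fun t ht => ?_⟩
  have hlower := h.le_anchoredLyapunov hα hβ ht₀ hΦ z ht
  have hanti : totalEnergy Φ x v t ≤ totalEnergy Φ x v t₀ :=
    h.antitoneOn_totalEnergy hα.le hβ ht₀.le hΦ self_mem_Ici ht ht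
  have hinf : ⨅ p, Φ p ≤ Φ (x t) := ciInf_le hbdd (x t)
  have hsplit : totalEnergy Φ x v t = Φ (x t) + 1 / 2 * ‖v t‖ ^ 2 := rfl
  have hmul : 3 / (2 * α) * (⨅ p, Φ p) ≤ 3 / (2 * α) * totalEnergy Φ x v t := by
    gcongr
    linarith [sq_nonneg ‖v t‖]
  linarith

theorem exists_totalEnergy_lt (h : IsDINAVDTrajectory α β t₀ Φ g B x v) (hα : 0 < α)
    (hβ : 0 ≤ β) (ht₀ : 0 < t₀) (hΦ : ConvexOn ℝ univ Φ) (hbdd : BddBelow (range Φ)) {z : E}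
    {c : ℝ} (hc : Φ z < c) : ∃ t ∈ Ici t₀, totalEnergy Φ x v t < c := by
  by_contra! hge
  refine not_bddBelow_of_hasDerivAt_le_neg_mul_inv ht₀ (sub_pos.2 hc)
    (fun t ht => (h.hasDerivAt_anchoredLyapunov hα.ne' z ht
      (ht₀.trans_le ht).ne').differentiableAt.hasDerivAt) (fun t ht => ?_)
    (h.bddBelow_anchoredLyapunov hα hβ ht₀ hΦ hbdd z)
  have htpos : 0 < t := ht₀.trans_le ht
  refine (h.deriv_anchoredLyapunov_le hα hβ ht₀ hΦ z ht).trans (neg_le_neg ?_)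
  rw [← div_eq_mul_inv]
  gcongr
  exact hge t ht

theorem tendsto_totalEnergy (h : IsDINAVDTrajectory α β t₀ Φ g B x v) (hα : 0 < α) (hβ : 0 ≤ β)
    (ht₀ : 0 < t₀) (hΦ : ConvexOn ℝ univ Φ) (hbdd : BddBelow (range Φ)) :
    Tendsto (totalEnergy Φ x v) atTop (𝓝 (⨅ p, Φ p)) := by
  refine tendsto_order.2 ⟨fun c hc => Eventually.of_forall fun t => ?_, fun c hc => ?_⟩
  · calc c < ⨅ p, Φ p := hc
      _ ≤ Φ (x t) := ciInf_le hbdd (x t)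
      _ ≤ totalEnergy Φ x v t := le_add_of_nonneg_right (by positivity)
  · obtain ⟨z, hz⟩ := exists_lt_of_ciInf_lt hc
    obtain ⟨s, hs, hlt⟩ := h.exists_totalEnergy_lt hα hβ ht₀ hΦ hbdd hz
    filter_upwards [eventually_ge_atTop s] with t hst
    exact (h.antitoneOn_totalEnergy hα.le hβ ht₀.le hΦ hs (hs.trans hst) hst).trans_lt hlt

theorem tendsto_potential (h : IsDINAVDTrajectory α β t₀ Φ g B x v) (hα : 0 < α) (hβ : 0 ≤ β)
    (ht₀ : 0 < t₀) (hΦ : ConvexOn ℝ univ Φ) (hbdd : BddBelow (range Φ)) :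
    Tendsto (fun t => Φ (x t)) atTop (𝓝 (⨅ p, Φ p)) :=
  tendsto_of_tendsto_of_tendsto_of_le_of_le tendsto_const_nhds
    (h.tendsto_totalEnergy hα hβ ht₀ hΦ hbdd) (fun t => ciInf_le hbdd (x t))
    fun t => le_add_of_nonneg_right (by positivity)

theorem tendsto_norm_velocity (h : IsDINAVDTrajectory α β t₀ Φ g B x v) (hα : 0 < α)
    (hβ : 0 ≤ β) (ht₀ : 0 < t₀) (hΦ : ConvexOn ℝ univ Φ) (hbdd : BddBelow (range Φ)) :
    Tendsto (fun t => ‖v t‖) atTop (𝓝 0) := by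
  have hkinetic := (h.tendsto_totalEnergy hα hβ ht₀ hΦ hbdd).sub
    (h.tendsto_potential hα hβ ht₀ hΦ hbdd)
  have hsqrt := (hkinetic.const_mul 2).sqrt
  rw [sub_self, mul_zero, Real.sqrt_zero] at hsqrt
  refine hsqrt.congr fun t => ?_
  rw [totalEnergy, add_sub_cancel_left, ← mul_assoc, mul_one_div_cancel two_ne_zero, one_mul,
    Real.sqrt_sq (norm_nonneg _)]

theorem exists_tendsto_dampedLyapunov (h : IsDINAVDTrajectory α β t₀ Φ g B x v) (hα : 0 ≤ α)
    (hβ : 0 ≤ β) (ht₀ : 0 < t₀) (hbdd : BddBelow (range Φ)) :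
    ∃ l, Tendsto (dampedLyapunov α β Φ g x v) atTop (𝓝 l) := by
  have hpos : ∀ t ∈ Ici t₀, 0 < t := fun t ht => ht₀.trans_le ht
  refine exists_tendsto_atTop_of_antitoneOn_Ici (antitoneOn_Ici_of_hasDerivAt_nonpos
    (fun t ht =>
      (h.hasDerivAt_dampedLyapunov ht (hpos t ht).ne').differentiableAt.hasDerivAt) fun t ht => ?_)
    (bddBelow_dampedLyapunov hα hβ hbdd ht₀.le)
  have htpos := hpos t ht
  have hfriction : 0 ≤ α * (1 / t * ‖v t‖ ^ 2) := by positivity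
  have hgradient : 0 ≤ β * ‖g (x t)‖ ^ 2 := by positivity
  linarith [h.deriv_dampedLyapunov_le hα hβ hbdd ht (hpos t ht).ne']

theorem exists_tendsto_norm_dampedVelocity (h : IsDINAVDTrajectory α β t₀ Φ g B x v)
    (hα : 0 < α) (hβ : 0 ≤ β) (ht₀ : 0 < t₀) (hΦ : ConvexOn ℝ univ Φ)
    (hbdd : BddBelow (range Φ)) :
    ∃ l, Tendsto (fun t => ‖dampedVelocity β g x v t‖) atTop (𝓝 l) := by
  obtain ⟨l, hl⟩ := h.exists_tendsto_dampedLyapunov hα.le hβ ht₀ hbdd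
  have hgap : Tendsto (fun t => (1 + α * β / t) * (Φ (x t) - ⨅ p, Φ p)) atTop
      (𝓝 ((1 + 0) * ((⨅ p, Φ p) - ⨅ p, Φ p))) :=
    ((tendsto_const_nhds.div_atTop tendsto_id).const_add 1).mul
      ((h.tendsto_potential hα hβ ht₀ hΦ hbdd).sub_const _)
  refine ⟨_, ((hl.sub hgap).const_mul 2).sqrt.congr fun t => ?_⟩
  rw [dampedLyapunov, add_sub_cancel_right, ← mul_assoc, mul_one_div_cancel two_ne_zero, one_mul,
    Real.sqrt_sq (norm_nonneg _)]

theorem exists_tendsto_norm_gradient (h : IsDINAVDTrajectory α β t₀ Φ g B x v) (hα : 0 < α)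
    (hβ : 0 < β) (ht₀ : 0 < t₀) (hΦ : ConvexOn ℝ univ Φ) (hbdd : BddBelow (range Φ)) :
    ∃ l, Tendsto (fun t => ‖g (x t)‖) atTop (𝓝 l) := by
  obtain ⟨l, hl⟩ := h.exists_tendsto_norm_dampedVelocity hα hβ.le ht₀ hΦ hbdd
  have hdist : Tendsto (fun t => ‖β • g (x t)‖ - ‖dampedVelocity β g x v t‖) atTop (𝓝 0) :=
    squeeze_zero_norm (fun t => (abs_norm_sub_norm_le _ _).trans_eq (by
      rw [dampedVelocity, sub_add_cancel_right, norm_neg]))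
      (h.tendsto_norm_velocity hα hβ.le ht₀ hΦ hbdd)
  refine ⟨_, ((hdist.add hl).const_mul β⁻¹).congr fun t => ?_⟩
  rw [sub_add_cancel, norm_smul, Real.norm_of_nonneg hβ.le, inv_mul_cancel_left₀ hβ.ne']

theorem tendsto_norm_gradient (h : IsDINAVDTrajectory α β t₀ Φ g B x v) (hα : 0 < α)
    (hβ : 0 < β) (ht₀ : 0 < t₀) (hΦ : ConvexOn ℝ univ Φ) (hbdd : BddBelow (range Φ)) :
    Tendsto (fun t => ‖g (x t)‖) atTop (𝓝 0) := by
  obtain ⟨l, hl⟩ := h.exists_tendsto_norm_gradient hα hβ ht₀ hΦ hbdd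
  have hsq : l ^ 2 = 0 := eq_zero_of_tendsto_of_integrableOn_Ici
    (h.integrableOn_norm_gradient_sq hα.le hβ ht₀ hbdd) (hl.pow 2)
  rwa [(pow_eq_zero_iff two_ne_zero).1 hsq] at hl

end IsDINAVDTrajectory

theorem stmt3_general {α β t₀ : ℝ} (hα : 0 < α) (hβ : 0 < β) (ht₀ : 0 < t₀) {Φ : E → ℝ}
    (hΦ : ConvexOn ℝ univ Φ) (hbdd : BddBelow (range Φ)) {g : E → E} {B : E → E →L[ℝ] E}
    {x v : ℝ → E} (h : IsDINAVDTrajectory α β t₀ Φ g B x v) :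
    Tendsto (fun t => ‖v t‖) atTop (𝓝 0) ∧
    Tendsto (fun t => ‖g (x t)‖) atTop (𝓝 0) ∧
    IntegrableOn (fun t => (1 / t) * ‖v t‖ ^ 2) (Ici t₀) ∧
    IntegrableOn (fun t => (1 / t) * ‖g (x t)‖ ^ 2) (Ici t₀) :=
  ⟨h.tendsto_norm_velocity hα hβ.le ht₀ hΦ hbdd, h.tendsto_norm_gradient hα hβ ht₀ hΦ hbdd,
    h.integrableOn_one_div_mul_norm_velocity_sq hα hβ.le ht₀ hbdd,
    h.integrableOn_one_div_mul_norm_gradient_sq hα.le hβ ht₀ hbdd⟩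

end GradientField

theorem differentiable_gradient_of_contDiff {Φ : H → ℝ} (hΦ : ContDiff ℝ 2 Φ) :
    Differentiable ℝ (gradient Φ) :=
  (InnerProductSpace.toDual ℝ H).symm.toContinuousLinearEquiv.differentiable.comp
    ((hΦ.fderiv_right (m := 1) (by norm_num)).differentiable (by norm_num))

theorem IsDINAVDSolution.isDINAVDTrajectory {α β t₀ : ℝ} {Φ : H → ℝ} {x x' x'' : ℝ → H}
    (hsol : IsDINAVDSolution α β t₀ Φ x x' x'') (hΦ : ContDiff ℝ 2 Φ) :
    IsDINAVDTrajectory α β t₀ Φ (gradient Φ) (fderiv ℝ (gradient Φ)) x x' where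
  hasFDerivAt_potential p := (hΦ.differentiable (by norm_num) p).hasGradientAt.hasFDerivAt
  hasFDerivAt_gradient p := (differentiable_gradient_of_contDiff hΦ p).hasFDerivAt
  hasDerivAt_position := hsol.1
  hasDerivAt_velocity t ht := by
    obtain ⟨-, hx', -, hode⟩ := hsol
    refine (hx' t ht).congr_deriv (eq_neg_of_add_eq_zero_left ?_)
    simpa only [add_assoc] using hode t ht

theorem stmt3 (α β t₀ : ℝ) (hα : 0 < α) (hβ : 0 < β) (ht₀ : 0 < t₀)
    (Φ : H → ℝ) (hconv : ConvexOn ℝ Set.univ Φ) (hΦ : ContDiff ℝ 2 Φ)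
    (hbdd : BddBelow (Set.range Φ))
    (x x' x'' : ℝ → H) (hsol : IsDINAVDSolution α β t₀ Φ x x' x'') :
    Tendsto (fun t => ‖x' t‖) atTop (𝓝 0) ∧
    Tendsto (fun t => ‖gradient Φ (x t)‖) atTop (𝓝 0) ∧
    IntegrableOn (fun t => (1 / t) * ‖x' t‖ ^ 2) (Set.Ici t₀) ∧
    IntegrableOn (fun t => (1 / t) * ‖gradient Φ (x t)‖ ^ 2) (Set.Ici t₀) :=
  stmt3_general hα hβ ht₀ hconv hbdd (hsol.isDINAVDTrajectory hΦ)
end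

section
/- Let α ≥ 3, β > 0, t₀ > 0, let Φ : H → ℝ be convex and twice continuously differentiable with x* ∈ argmin Φ, and let x : [t₀, ∞) → H be a solution of (DIN-AVD). Then the trajectory x is bounded, and for every λ ∈ [2, α−1] and all t, s with t ≥ s > max{t₀, β}, one has Φ(x(t)) − min Φ ≤ (1/t²)(s/(s−β))^{α−2} 𝓔_λ(s). In particular there is a constant C such that Φ(x(t)) − min Φ ≤ C/t² for all large t. -/
open Filter MeasureTheory Set
open scoped Topology RealInnerProductSpace

variable {H : Type*} [NormedAddCommGroup H] [InnerProductSpace ℝ H] [CompleteSpace H]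

/-- The energy function `𝓔_λ`. -/
noncomputable def energyE (α β lam : ℝ) (Φ : H → ℝ) (xstar : H) (x x' : ℝ → H) (t : ℝ) : ℝ :=
  t * (t - β * (lam + 2 - α)) * (Φ (x t) - Φ xstar)
    + (1 / 2) * ‖lam • (x t - xstar) + t • (x' t + β • gradient Φ (x t))‖ ^ 2
    + lam * (α - lam - 1) / 2 * ‖x t - xstar‖ ^ 2

/-!
For `λ ∈ [2, α - 1]`, differentiating `𝓔_λ` along a solution and using
`Φ(x) - min Φ ≤ ⟪∇Φ(x), x - x*⟫` leaves `𝓔_λ' ≤ (α - 2) β (Φ(x) - min Φ)`, while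
`t (t - β) (Φ(x) - min Φ) ≤ 𝓔_λ`. Hence `t (t - β) 𝓔_λ' ≤ (α - 2) β 𝓔_λ`, so
`(t / (t - β)) ^ (α - 2) 𝓔_λ` is nonincreasing, and the rate follows since `α - 2 ≥ 1`.

The energy also bounds `v = λ (x - x*) + t (ẋ + β ∇Φ(x))`. As `⟪∇Φ(x), x - x*⟫ ≥ 0`, pairing `v`
with `x - x*` shows that a ball around `x*` of radius at least `sup ‖v‖ / λ` cannot be left.
-/

section Gradient

lemma contDiff_gradient_s6 {f : H → ℝ} {m n : WithTop ℕ∞} (hf : ContDiff ℝ n f) (hmn : m + 1 ≤ n) :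
    ContDiff ℝ m (gradient f) :=
  (InnerProductSpace.toDual ℝ H).symm.contDiff.comp (hf.fderiv_right hmn)

lemma sub_le_inner_gradient_of_convexOn {f : H → ℝ} {S : Set H} {y z : H}
    (hf : ConvexOn ℝ S f) (hy : y ∈ S) (hz : z ∈ S) (hfy : DifferentiableAt ℝ f y) :
    f y - f z ≤ ⟪gradient f y, y - z⟫ := by
  have hline : HasDerivAt (f ∘ AffineMap.lineMap y z) (fderiv ℝ f y (z - y)) (0 : ℝ) := by
    refine HasFDerivAt.comp_hasDerivAt (0 : ℝ) ?_ AffineMap.hasDerivAt_lineMap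
    simpa only [AffineMap.lineMap_apply_zero] using hfy.hasFDerivAt
  have hslope := (hf.comp_affineMap (AffineMap.lineMap y z)).le_slope_of_hasDerivAt
    (x := (0 : ℝ)) (y := 1) (by simpa using hy) (by simpa using hz) one_pos hline
  have hinner : ⟪gradient f y, y - z⟫ = -fderiv ℝ f y (z - y) := by
    rw [inner_gradient_left, ← map_neg, neg_sub]
  have hsecant : slope (f ∘ AffineMap.lineMap y z) (0 : ℝ) 1 = f z - f y := by
    simp [slope_def_field]
  linarith

end Gradient

section IntegratingFactor

lemma hasDerivAt_rpow_div_sub {β t : ℝ} (p : ℝ) (ht : t ≠ 0) (htβ : t ≠ β) :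
    HasDerivAt (fun u => (u / (u - β)) ^ p)
      (-(p * β / (t * (t - β))) * (t / (t - β)) ^ p) t := by
  have hsub : t - β ≠ 0 := sub_ne_zero.2 htβ
  have hdiv : t / (t - β) ≠ 0 := div_ne_zero ht hsub
  refine (((hasDerivAt_id t).div ((hasDerivAt_id t).sub_const β) hsub).rpow_const
    (p := p) (Or.inl hdiv)).congr_deriv ?_
  simp only [Pi.div_apply, id_eq, Real.rpow_sub_one hdiv]
  field_simp
  ring

-- The weight is an integrating factor: its logarithmic derivative is `-p * β / (t * (t - β))`.
lemma antitoneOn_rpow_div_sub_mul {a β p : ℝ} {f : ℝ → ℝ} (ha : 0 ≤ a) (hβa : β ≤ a)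
    (hf : ∀ t, a < t → DifferentiableAt ℝ f t)
    (hf' : ∀ t, a < t → t * (t - β) * deriv f t ≤ p * β * f t) :
    AntitoneOn (fun t => (t / (t - β)) ^ p * f t) (Ioi a) := by
  have hderiv : ∀ t, a < t → HasDerivAt (fun t => (t / (t - β)) ^ p * f t)
      (-(p * β / (t * (t - β))) * (t / (t - β)) ^ p * f t + (t / (t - β)) ^ p * deriv f t) t :=
    fun t ht => (hasDerivAt_rpow_div_sub p (ha.trans_lt ht).ne' (hβa.trans_lt ht).ne').mul
      (hf t ht).hasDerivAt
  refine antitoneOn_of_hasDerivWithinAt_nonpos (convex_Ioi a)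
    (fun t ht => (hderiv t ht).continuousAt.continuousWithinAt)
    (fun t ht => (hderiv t (interior_subset ht)).hasDerivWithinAt) fun t ht => ?_
  have hat : a < t := interior_subset ht
  have ht0 : 0 < t := ha.trans_lt hat
  have htβ : 0 < t - β := sub_pos.2 (hβa.trans_lt hat)
  have hfactor : -(p * β / (t * (t - β))) * (t / (t - β)) ^ p * f t
      + (t / (t - β)) ^ p * deriv f t
      = (t / (t - β)) ^ p / (t * (t - β)) * (t * (t - β) * deriv f t - p * β * f t) := by
    field_simp
    ring
  rw [hfactor]
  exact mul_nonpos_of_nonneg_of_nonpos (by positivity) (sub_nonpos.2 (hf' t hat))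

end IntegratingFactor

section InvariantBall

variable {E : Type*} [NormedAddCommGroup E] [InnerProductSpace ℝ E]
  {y y' w : ℝ → E} {lam m s t : ℝ}

-- The derivative of this function at `u` is at most `-(lam * u ^ (lam - 1) * (‖y u‖ - m) ^ 2)`.
lemma antitoneOn_rpow_mul_norm_sq_sub_sq (hlam : 0 ≤ lam) (hs : 0 < s)
    (hy : ∀ u, s ≤ u → HasDerivAt y (y' u) u) (hw : ∀ u, s ≤ u → 0 ≤ ⟪w u, y u⟫)
    (hv : ∀ u, s ≤ u → ‖lam • y u + u • (y' u + w u)‖ ≤ lam * m) :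
    AntitoneOn (fun u => u ^ lam * (‖y u‖ ^ 2 - m ^ 2)) (Ici s) := by
  have hderiv : ∀ u, s ≤ u → HasDerivAt (fun u => u ^ lam * (‖y u‖ ^ 2 - m ^ 2))
      (lam * u ^ (lam - 1) * (‖y u‖ ^ 2 - m ^ 2) + u ^ lam * (2 * ⟪y u, y' u⟫)) u := fun u hu =>
    (Real.hasDerivAt_rpow_const (Or.inl (hs.trans_le hu).ne')).mul ((hy u hu).norm_sq.sub_const _)
  refine antitoneOn_of_hasDerivWithinAt_nonpos (convex_Ici s)
    (fun u hu => (hderiv u hu).continuousAt.continuousWithinAt)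
    (fun u hu => (hderiv u (interior_subset hu)).hasDerivWithinAt) fun u hu => ?_
  have hsu : s ≤ u := interior_subset hu
  have hu0 : 0 < u := hs.trans_le hsu
  have hinner : lam * ‖y u‖ ^ 2 + u * ⟪y u, y' u⟫ ≤ lam * m * ‖y u‖ :=
    calc lam * ‖y u‖ ^ 2 + u * ⟪y u, y' u⟫
        ≤ lam * ‖y u‖ ^ 2 + u * (⟪y u, y' u⟫ + ⟪w u, y u⟫) := by
          gcongr; exact le_add_of_nonneg_right (hw u hsu)
      _ = ⟪lam • y u + u • (y' u + w u), y u⟫ := by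
          simp only [inner_add_left, real_inner_smul_left, real_inner_self_eq_norm_sq,
            real_inner_comm (y' u)]
      _ ≤ ‖lam • y u + u • (y' u + w u)‖ * ‖y u‖ := real_inner_le_norm _ _
      _ ≤ lam * m * ‖y u‖ := by gcongr; exact hv u hsu
  have hpow : u ^ lam = u ^ (lam - 1) * u := by
    rw [Real.rpow_sub_one hu0.ne', div_mul_cancel₀ _ hu0.ne']
  calc lam * u ^ (lam - 1) * (‖y u‖ ^ 2 - m ^ 2) + u ^ lam * (2 * ⟪y u, y' u⟫)
      = u ^ (lam - 1) * (2 * (lam * ‖y u‖ ^ 2 + u * ⟪y u, y' u⟫)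
          - lam * (‖y u‖ ^ 2 + m ^ 2)) := by rw [hpow]; ring
    _ ≤ u ^ (lam - 1) * (2 * (lam * m * ‖y u‖) - lam * (‖y u‖ ^ 2 + m ^ 2)) := by gcongr
    _ = -(u ^ (lam - 1) * (lam * (‖y u‖ - m) ^ 2)) := by ring
    _ ≤ 0 := neg_nonpos.2 (by positivity)

lemma norm_le_of_norm_smul_add_smul_le (hlam : 0 ≤ lam) (hs : 0 < s)
    (hy : ∀ u, s ≤ u → HasDerivAt y (y' u) u) (hw : ∀ u, s ≤ u → 0 ≤ ⟪w u, y u⟫)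
    (hv : ∀ u, s ≤ u → ‖lam • y u + u • (y' u + w u)‖ ≤ lam * m) (hm : ‖y s‖ ≤ m)
    (hst : s ≤ t) : ‖y t‖ ≤ m := by
  have hinit : s ^ lam * (‖y s‖ ^ 2 - m ^ 2) ≤ 0 :=
    mul_nonpos_of_nonneg_of_nonpos (by positivity) (sub_nonpos.2 (by gcongr))
  have hsq : ‖y t‖ ^ 2 - m ^ 2 ≤ 0 :=
    nonpos_of_mul_nonpos_right
      ((antitoneOn_rpow_mul_norm_sq_sub_sq hlam hs hy hw hv self_mem_Ici hst hst).trans hinit)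
      (Real.rpow_pos_of_pos (hs.trans_le hst) _)
  exact le_of_sq_le_sq (sub_nonpos.1 hsq) ((norm_nonneg _).trans hm)

end InvariantBall

section Energy

variable {α β t₀ lam s t : ℝ} {Φ : H → ℝ} {xstar : H} {x x' x'' : ℝ → H}

/-- The vector `λ (x(t) - x*) + t (ẋ(t) + β ∇Φ(x(t)))` whose squared norm enters `𝓔_λ(t)`. -/
noncomputable def energyVector (β lam : ℝ) (Φ : H → ℝ) (xstar : H) (x x' : ℝ → H) (t : ℝ) : H :=
  lam • (x t - xstar) + t • (x' t + β • gradient Φ (x t))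

lemma mul_sub_min_add_norm_sq_le_energyE (hβ : 0 ≤ β) (hlam : lam ∈ Icc 0 (α - 1))
    (hmin : ∀ z, Φ xstar ≤ Φ z) (ht : 0 ≤ t) :
    t * (t - β) * (Φ (x t) - Φ xstar) + 1 / 2 * ‖energyVector β lam Φ xstar x x' t‖ ^ 2
      ≤ energyE α β lam Φ xstar x x' t := by
  obtain ⟨hlam₀, hlam₁⟩ := hlam
  have hgap : t * (t - β) * (Φ (x t) - Φ xstar)
      ≤ t * (t - β * (lam + 2 - α)) * (Φ (x t) - Φ xstar) := by
    have hcoef : β * (lam + 2 - α) ≤ β := mul_le_of_le_one_right hβ (by linarith)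
    have hpos : 0 ≤ Φ (x t) - Φ xstar := sub_nonneg.2 (hmin _)
    gcongr
  have hdist : 0 ≤ lam * (α - lam - 1) / 2 * ‖x t - xstar‖ ^ 2 := by
    have : 0 ≤ α - lam - 1 := by linarith
    positivity
  unfold energyE energyVector
  linarith

lemma mul_sub_min_le_energyE (hβ : 0 ≤ β) (hlam : lam ∈ Icc 0 (α - 1))
    (hmin : ∀ z, Φ xstar ≤ Φ z) (ht : 0 ≤ t) :
    t * (t - β) * (Φ (x t) - Φ xstar) ≤ energyE α β lam Φ xstar x x' t :=
  (le_add_of_nonneg_right (by positivity)).trans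
    (mul_sub_min_add_norm_sq_le_energyE hβ hlam hmin ht)

lemma half_norm_sq_energyVector_le_energyE (hβ : 0 ≤ β) (hlam : lam ∈ Icc 0 (α - 1))
    (hmin : ∀ z, Φ xstar ≤ Φ z) (ht : β ≤ t) :
    1 / 2 * ‖energyVector β lam Φ xstar x x' t‖ ^ 2 ≤ energyE α β lam Φ xstar x x' t :=
  (le_add_of_nonneg_left (mul_nonneg (mul_nonneg (hβ.trans ht) (sub_nonneg.2 ht))
    (sub_nonneg.2 (hmin _)))).trans
    (mul_sub_min_add_norm_sq_le_energyE hβ hlam hmin (hβ.trans ht))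

lemma energyE_nonneg (hβ : 0 ≤ β) (hlam : lam ∈ Icc 0 (α - 1)) (hmin : ∀ z, Φ xstar ≤ Φ z)
    (ht : β ≤ t) : 0 ≤ energyE α β lam Φ xstar x x' t :=
  le_trans (by positivity) (half_norm_sq_energyVector_le_energyE hβ hlam hmin ht)

namespace IsDINAVDSolution

lemma continuousOn (hsol : IsDINAVDSolution α β t₀ Φ x x' x'') : ContinuousOn x (Ici t₀) :=
  fun t ht => (hsol.1 t ht).continuousAt.continuousWithinAt

lemma hasDerivAt_energyVector (hsol : IsDINAVDSolution α β t₀ Φ x x' x'')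
    (hgrad : Differentiable ℝ (gradient Φ)) (ht₀ : 0 < t₀) (ht : t₀ ≤ t) :
    HasDerivAt (energyVector β lam Φ xstar x x')
      ((lam + 1 - α) • x' t + (β - t) • gradient Φ (x t)) t := by
  obtain ⟨hx, hx', -, hode⟩ := hsol
  have ht0 : t ≠ 0 := (ht₀.trans_le ht).ne'
  have hgradx : HasDerivAt (fun u => gradient Φ (x u))
      (fderiv ℝ (gradient Φ) (x t) (x' t)) t :=
    (hgrad (x t)).hasFDerivAt.comp_hasDerivAt t (hx t ht)
  have hacc : x'' t = -((α / t) • x' t + β • fderiv ℝ (gradient Φ) (x t) (x' t)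
      + gradient Φ (x t)) := by
    rw [eq_neg_iff_add_eq_zero, ← hode t ht]
    abel
  refine ((((hx t ht).sub_const xstar).const_smul lam).add
    ((hasDerivAt_id t).smul ((hx' t ht).add (hgradx.const_smul β)))).congr_deriv ?_
  simp only [hacc, id_eq, Pi.add_apply, Pi.smul_apply]
  match_scalars <;> field_simp <;> ring

lemma hasDerivAt_energyE (hsol : IsDINAVDSolution α β t₀ Φ x x' x'')
    (hΦ : Differentiable ℝ Φ) (hgrad : Differentiable ℝ (gradient Φ))
    (ht₀ : 0 < t₀) (ht : t₀ ≤ t) :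
    HasDerivAt (energyE α β lam Φ xstar x x')
      ((2 * t - β * (lam + 2 - α)) * (Φ (x t) - Φ xstar)
        - lam * (t - β) * ⟪gradient Φ (x t), x t - xstar⟫
        - t * (α - lam - 1) * ‖x' t‖ ^ 2
        - t * β * (t - β) * ‖gradient Φ (x t)‖ ^ 2) t := by
  have hx : HasDerivAt x (x' t) t := hsol.1 t ht
  have hΦx : HasDerivAt (fun u => Φ (x u)) ⟪gradient Φ (x t), x' t⟫ t := by
    rw [inner_gradient_left]
    exact (hΦ (x t)).hasFDerivAt.comp_hasDerivAt t hx
  have hcoef : HasDerivAt (fun u : ℝ => u * (u - β * (lam + 2 - α)))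
      (1 * (t - β * (lam + 2 - α)) + t * 1) t :=
    (hasDerivAt_id t).mul ((hasDerivAt_id t).sub_const _)
  have hv := hsol.hasDerivAt_energyVector (lam := lam) (xstar := xstar) hgrad ht₀ ht
  refine (((hcoef.mul (hΦx.sub_const (Φ xstar))).add (hv.norm_sq.const_mul (1 / 2))).add
    ((hx.sub_const xstar).norm_sq.const_mul (lam * (α - lam - 1) / 2))).congr_deriv ?_
  simp only [energyVector, inner_add_left, inner_add_right, real_inner_smul_left,
    real_inner_smul_right, real_inner_self_eq_norm_sq,
    real_inner_comm (x t - xstar) (gradient Φ (x t)), real_inner_comm (x' t) (gradient Φ (x t))]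
  ring

lemma deriv_energyE_le (hsol : IsDINAVDSolution α β t₀ Φ x x' x'')
    (hΦ : Differentiable ℝ Φ) (hgrad : Differentiable ℝ (gradient Φ))
    (hstar : ∀ y, Φ y - Φ xstar ≤ ⟪gradient Φ y, y - xstar⟫) (hmin : ∀ z, Φ xstar ≤ Φ z)
    (hβ : 0 ≤ β) (ht₀ : 0 < t₀) (hlam : lam ∈ Icc 2 (α - 1)) (ht : t₀ ≤ t) (hβt : β ≤ t) :
    deriv (energyE α β lam Φ xstar x x') t ≤ (α - 2) * β * (Φ (x t) - Φ xstar) := by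
  obtain ⟨hlam₂, hlamα⟩ := hlam
  have ht0 : 0 < t := ht₀.trans_le ht
  have htβ : 0 ≤ t - β := sub_nonneg.2 hβt
  have hvel : 0 ≤ t * (α - lam - 1) * ‖x' t‖ ^ 2 := by
    have : 0 ≤ α - lam - 1 := by linarith
    positivity
  have hgradSq : 0 ≤ t * β * (t - β) * ‖gradient Φ (x t)‖ ^ 2 := by positivity
  have hinner : lam * (t - β) * (Φ (x t) - Φ xstar)
      ≤ lam * (t - β) * ⟪gradient Φ (x t), x t - xstar⟫ :=
    mul_le_mul_of_nonneg_left (hstar _) (mul_nonneg (by linarith) htβ)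
  have hgap : 0 ≤ (lam - 2) * t * (Φ (x t) - Φ xstar) :=
    mul_nonneg (mul_nonneg (sub_nonneg.2 hlam₂) ht0.le) (sub_nonneg.2 (hmin _))
  rw [(hsol.hasDerivAt_energyE hΦ hgrad ht₀ ht).deriv]
  linarith

lemma antitoneOn_rpow_mul_energyE (hsol : IsDINAVDSolution α β t₀ Φ x x' x'')
    (hΦ : Differentiable ℝ Φ) (hgrad : Differentiable ℝ (gradient Φ))
    (hstar : ∀ y, Φ y - Φ xstar ≤ ⟪gradient Φ y, y - xstar⟫) (hmin : ∀ z, Φ xstar ≤ Φ z)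
    (hβ : 0 ≤ β) (ht₀ : 0 < t₀) (hlam : lam ∈ Icc 2 (α - 1)) :
    AntitoneOn (fun t => (t / (t - β)) ^ (α - 2) * energyE α β lam Φ xstar x x' t)
      (Ioi (max t₀ β)) := by
  refine antitoneOn_rpow_div_sub_mul (le_max_of_le_left ht₀.le) (le_max_right _ _)
    (fun t ht => (hsol.hasDerivAt_energyE hΦ hgrad ht₀ (max_lt_iff.1 ht).1.le).differentiableAt)
    fun t ht => ?_
  obtain ⟨ht₀t, hβt⟩ := max_lt_iff.1 ht
  have ht0 : 0 < t := ht₀.trans ht₀t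
  have : 0 < t - β := sub_pos.2 hβt
  have hα : 0 ≤ α - 2 := by linarith [hlam.1, hlam.2]
  calc t * (t - β) * deriv (energyE α β lam Φ xstar x x') t
      ≤ t * (t - β) * ((α - 2) * β * (Φ (x t) - Φ xstar)) := by
        gcongr
        exact hsol.deriv_energyE_le hΦ hgrad hstar hmin hβ ht₀ hlam ht₀t.le hβt.le
    _ = (α - 2) * β * (t * (t - β) * (Φ (x t) - Φ xstar)) := by ring
    _ ≤ (α - 2) * β * energyE α β lam Φ xstar x x' t := by
        gcongr
        exact mul_sub_min_le_energyE hβ (Icc_subset_Icc_left zero_le_two hlam) hmin ht0.le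

lemma sub_min_le (hsol : IsDINAVDSolution α β t₀ Φ x x' x'')
    (hΦ : Differentiable ℝ Φ) (hgrad : Differentiable ℝ (gradient Φ))
    (hstar : ∀ y, Φ y - Φ xstar ≤ ⟪gradient Φ y, y - xstar⟫) (hmin : ∀ z, Φ xstar ≤ Φ z)
    (hβ : 0 ≤ β) (ht₀ : 0 < t₀) (hlam : lam ∈ Icc 2 (α - 1)) (hs : max t₀ β < s) (hst : s ≤ t) :
    Φ (x t) - Φ xstar ≤
      (1 / t ^ 2) * (s / (s - β)) ^ (α - 2) * energyE α β lam Φ xstar x x' s := by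
  obtain ⟨ht₀t, hβt⟩ := max_lt_iff.1 (hs.trans_le hst)
  have ht0 : 0 < t := ht₀.trans ht₀t
  have htβ : 0 < t - β := sub_pos.2 hβt
  have hbase : 1 ≤ t / (t - β) := (one_le_div htβ).2 (sub_le_self _ hβ)
  have hweight : t / (t - β) ≤ (t / (t - β)) ^ (α - 2) :=
    Real.self_le_rpow_of_one_le hbase (by linarith [hlam.1, hlam.2])
  have hlam' : lam ∈ Icc 0 (α - 1) := Icc_subset_Icc_left zero_le_two hlam
  have hE : 0 ≤ energyE α β lam Φ xstar x x' t := energyE_nonneg hβ hlam' hmin hβt.le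
  have hdecay : t ^ 2 * (Φ (x t) - Φ xstar)
      ≤ (s / (s - β)) ^ (α - 2) * energyE α β lam Φ xstar x x' s :=
    calc t ^ 2 * (Φ (x t) - Φ xstar)
        = t / (t - β) * (t * (t - β) * (Φ (x t) - Φ xstar)) := by field_simp
      _ ≤ t / (t - β) * energyE α β lam Φ xstar x x' t := by
        gcongr
        exact mul_sub_min_le_energyE hβ hlam' hmin ht0.le
      _ ≤ (t / (t - β)) ^ (α - 2) * energyE α β lam Φ xstar x x' t := by gcongr
      _ ≤ (s / (s - β)) ^ (α - 2) * energyE α β lam Φ xstar x x' s :=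
        hsol.antitoneOn_rpow_mul_energyE hΦ hgrad hstar hmin hβ ht₀ hlam hs (hs.trans_le hst) hst
  rwa [mul_assoc, one_div_mul_eq_div, le_div_iff₀' (by positivity)]

lemma norm_energyVector_sq_le (hsol : IsDINAVDSolution α β t₀ Φ x x' x'')
    (hΦ : Differentiable ℝ Φ) (hgrad : Differentiable ℝ (gradient Φ))
    (hstar : ∀ y, Φ y - Φ xstar ≤ ⟪gradient Φ y, y - xstar⟫) (hmin : ∀ z, Φ xstar ≤ Φ z)
    (hβ : 0 ≤ β) (ht₀ : 0 < t₀) (hlam : lam ∈ Icc 2 (α - 1)) (hs : max t₀ β < s) (hst : s ≤ t) :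
    ‖energyVector β lam Φ xstar x x' t‖ ^ 2
      ≤ 2 * ((s / (s - β)) ^ (α - 2) * energyE α β lam Φ xstar x x' s) := by
  obtain ⟨-, hβt⟩ := max_lt_iff.1 (hs.trans_le hst)
  have hweight : 1 ≤ (t / (t - β)) ^ (α - 2) :=
    Real.one_le_rpow ((one_le_div (sub_pos.2 hβt)).2 (sub_le_self _ hβ))
      (by linarith [hlam.1, hlam.2])
  have hlam' : lam ∈ Icc 0 (α - 1) := Icc_subset_Icc_left zero_le_two hlam
  have hdecay : 1 / 2 * ‖energyVector β lam Φ xstar x x' t‖ ^ 2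
      ≤ (s / (s - β)) ^ (α - 2) * energyE α β lam Φ xstar x x' s :=
    calc 1 / 2 * ‖energyVector β lam Φ xstar x x' t‖ ^ 2
        ≤ energyE α β lam Φ xstar x x' t :=
        half_norm_sq_energyVector_le_energyE hβ hlam' hmin hβt.le
      _ ≤ (t / (t - β)) ^ (α - 2) * energyE α β lam Φ xstar x x' t :=
        le_mul_of_one_le_left (energyE_nonneg hβ hlam' hmin hβt.le) hweight
      _ ≤ (s / (s - β)) ^ (α - 2) * energyE α β lam Φ xstar x x' s :=
        hsol.antitoneOn_rpow_mul_energyE hΦ hgrad hstar hmin hβ ht₀ hlam hs (hs.trans_le hst) hst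
  linarith

lemma norm_sub_le (hsol : IsDINAVDSolution α β t₀ Φ x x' x'')
    (hΦ : Differentiable ℝ Φ) (hgrad : Differentiable ℝ (gradient Φ))
    (hstar : ∀ y, Φ y - Φ xstar ≤ ⟪gradient Φ y, y - xstar⟫) (hmin : ∀ z, Φ xstar ≤ Φ z)
    (hβ : 0 ≤ β) (ht₀ : 0 < t₀) (hlam : lam ∈ Icc 2 (α - 1)) (hs : max t₀ β < s) (hst : s ≤ t) :
    ‖x t - xstar‖ ≤ max ‖x s - xstar‖
      (√(2 * ((s / (s - β)) ^ (α - 2) * energyE α β lam Φ xstar x x' s)) / lam) := by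
  obtain ⟨ht₀s, -⟩ := max_lt_iff.1 hs
  have hlam₀ : 0 < lam := zero_lt_two.trans_le hlam.1
  set K := 2 * ((s / (s - β)) ^ (α - 2) * energyE α β lam Φ xstar x x' s)
  refine norm_le_of_norm_smul_add_smul_le (w := fun u => β • gradient Φ (x u)) hlam₀.le
    (ht₀.trans ht₀s) (fun u hu => (hsol.1 u (ht₀s.le.trans hu)).sub_const xstar)
    (fun u _ => ?_) (fun u hu => ?_) (le_max_left _ _) hst
  · rw [real_inner_smul_left]
    exact mul_nonneg hβ ((sub_nonneg.2 (hmin _)).trans (hstar _))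
  · calc ‖energyVector β lam Φ xstar x x' u‖
        ≤ √K := Real.le_sqrt_of_sq_le
          (hsol.norm_energyVector_sq_le hΦ hgrad hstar hmin hβ ht₀ hlam hs hu)
      _ = lam * (√K / lam) := (mul_div_cancel₀ _ hlam₀.ne').symm
      _ ≤ lam * max ‖x s - xstar‖ (√K / lam) := by gcongr; exact le_max_right _ _

lemma exists_norm_le (hsol : IsDINAVDSolution α β t₀ Φ x x' x'')
    (hΦ : Differentiable ℝ Φ) (hgrad : Differentiable ℝ (gradient Φ))
    (hstar : ∀ y, Φ y - Φ xstar ≤ ⟪gradient Φ y, y - xstar⟫) (hmin : ∀ z, Φ xstar ≤ Φ z)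
    (hβ : 0 ≤ β) (ht₀ : 0 < t₀) (hα : 3 ≤ α) :
    ∃ R : ℝ, ∀ t, t₀ ≤ t → ‖x t‖ ≤ R := by
  obtain ⟨s, hs⟩ := exists_gt (max t₀ β)
  have hlam : (2 : ℝ) ∈ Icc 2 (α - 1) := ⟨le_rfl, by linarith⟩
  obtain ⟨m, hm⟩ : ∃ m, ∀ t, s ≤ t → ‖x t - xstar‖ ≤ m :=
    ⟨_, fun t => hsol.norm_sub_le hΦ hgrad hstar hmin hβ ht₀ hlam hs⟩
  obtain ⟨C, hC⟩ := isCompact_Icc.exists_bound_of_continuousOn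
    (hsol.continuousOn.mono (Icc_subset_Ici_self : Icc t₀ s ⊆ Ici t₀))
  refine ⟨max C (m + ‖xstar‖), fun t ht => ?_⟩
  rcases le_total t s with hts | hst
  · exact le_max_of_le_left (hC t ⟨ht, hts⟩)
  · exact le_max_of_le_right ((norm_le_norm_sub_add _ xstar).trans (by gcongr; exact hm t hst))

end IsDINAVDSolution

end Energy

theorem stmt6_general (α β t₀ : ℝ) (hα : 3 ≤ α) (hβ : 0 ≤ β) (ht₀ : 0 < t₀)
    (Φ : H → ℝ) (hΦ : Differentiable ℝ Φ) (hgrad : Differentiable ℝ (gradient Φ))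
    (xstar : H) (hstar : ∀ y, Φ y - Φ xstar ≤ ⟪gradient Φ y, y - xstar⟫)
    (hmin : ∀ z, Φ xstar ≤ Φ z)
    (x x' x'' : ℝ → H) (hsol : IsDINAVDSolution α β t₀ Φ x x' x'') :
    (∃ R : ℝ, ∀ t, t₀ ≤ t → ‖x t‖ ≤ R) ∧
    (∀ lam ∈ Set.Icc 2 (α - 1), ∀ s t : ℝ, max t₀ β < s → s ≤ t →
      Φ (x t) - Φ xstar ≤
        (1 / t ^ 2) * (s / (s - β)) ^ (α - 2) * energyE α β lam Φ xstar x x' s) ∧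
    (∃ C T : ℝ, ∀ t, T ≤ t → Φ (x t) - Φ xstar ≤ C / t ^ 2) := by
  refine ⟨hsol.exists_norm_le hΦ hgrad hstar hmin hβ ht₀ hα,
    fun lam hlam s t => hsol.sub_min_le hΦ hgrad hstar hmin hβ ht₀ hlam, ?_⟩
  obtain ⟨s, hs⟩ := exists_gt (max t₀ β)
  refine ⟨(s / (s - β)) ^ (α - 2) * energyE α β 2 Φ xstar x x' s, s, fun t hst => ?_⟩
  rw [← one_div_mul_eq_div, ← mul_assoc]
  exact hsol.sub_min_le hΦ hgrad hstar hmin hβ ht₀ ⟨le_rfl, by linarith⟩ hs hst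

theorem stmt6 (α β t₀ : ℝ) (hα : 3 ≤ α) (hβ : 0 < β) (ht₀ : 0 < t₀)
    (Φ : H → ℝ) (hconv : ConvexOn ℝ Set.univ Φ) (hΦ : ContDiff ℝ 2 Φ)
    (xstar : H) (hmin : ∀ z, Φ xstar ≤ Φ z)
    (x x' x'' : ℝ → H) (hsol : IsDINAVDSolution α β t₀ Φ x x' x'') :
    (∃ R : ℝ, ∀ t, t₀ ≤ t → ‖x t‖ ≤ R) ∧
    (∀ lam ∈ Set.Icc 2 (α - 1), ∀ s t : ℝ, max t₀ β < s → s ≤ t →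
      Φ (x t) - Φ xstar ≤
        (1 / t ^ 2) * (s / (s - β)) ^ (α - 2) * energyE α β lam Φ xstar x x' s) ∧
    (∃ C T : ℝ, ∀ t, T ≤ t → Φ (x t) - Φ xstar ≤ C / t ^ 2) :=
  stmt6_general α β t₀ hα hβ.le ht₀ Φ (hΦ.differentiable two_ne_zero)
    ((contDiff_gradient_s6 (m := 1) hΦ one_add_one_eq_two.le).differentiable one_ne_zero) xstar
    (fun y => sub_le_inner_gradient_of_convexOn hconv (mem_univ y) (mem_univ xstar)
      (hΦ.differentiable two_ne_zero y)) hmin x x' x'' hsol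
end
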